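/- Let n ≥ 1 and let θ be a permutation of {1,…,n} whose disjoint cycle decomposition contains no cycle of length divisible by 4. Let F be the number of fixed points of θ, r the number of cycles of odd length (≥ 3) in the decomposition, s the number of cycles of length ≡ 2 (mod 4) and greater than 2, and t the number of cycles of length 2. Then det(P_θ + P_{θ⁻¹}) = (−1)^{s+t} · 2^{F + r + 2(s+t)} and det(S_θ) = (−1)^{s+t} · 2^{r + 2s}. -/

import Mathlib

open Finset

/-- The permutation matrix of `θ`: `(P_θ)_{i,j} = 1` if `i = θ(j)`, else `0`. -/
noncomputable def permMat {n : ℕ} (θ : Equiv.Perm (Fin n)) : Matrix (Fin n) (Fin n) ℂ :=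
  Matrix.of fun i j => if i = θ j then 1 else 0

/-- The symmetric matrix `S_θ`: `(S_θ)_{i,j} = 1` if `θ(i) = j` or `θ⁻¹(i) = j`, else `0`. -/
noncomputable def symMat {n : ℕ} (θ : Equiv.Perm (Fin n)) : Matrix (Fin n) (Fin n) ℂ :=
  Matrix.of fun i j => if θ i = j ∨ θ⁻¹ i = j then 1 else 0

/-- auxiliary matrix -/
noncomputable def auxQ {n : ℕ} (x : ℂ) (θ : Equiv.Perm (Fin n)) : Matrix (Fin n) (Fin n) ℂ :=
  Matrix.of fun i j => (if i = j then 1 else 0) - (if i = θ j ∧ θ j ≠ j then x else 0)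

/-- auxiliary matrix -/
noncomputable def auxN {n : ℕ} (x : ℂ) (θ : Equiv.Perm (Fin n)) : Matrix (Fin n) (Fin n) ℂ :=
  Matrix.of fun i j => if i = θ j ∧ θ j ≠ j then x else 0

lemma auxQ_eq {n : ℕ} (x : ℂ) (θ : Equiv.Perm (Fin n)) : auxQ x θ = 1 - auxN x θ := by
  ext i j
  simp [auxQ, auxN, Matrix.one_apply]

lemma auxQ_mul {n : ℕ} (x : ℂ) (σ τ : Equiv.Perm (Fin n)) (h : σ.Disjoint τ) :
    auxQ x (σ * τ) = auxQ x σ * auxQ x τ := by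
  have key : auxN x σ * auxN x τ = 0 := by
    ext i j
    rw [Matrix.mul_apply]
    apply Finset.sum_eq_zero
    intro k _
    simp only [auxN, Matrix.of_apply]
    by_cases h1 : i = σ k ∧ σ k ≠ k
    · rw [if_neg (c := k = τ j ∧ τ j ≠ j), mul_zero]
      rintro ⟨rfl, h4⟩
      rcases h (τ j) with h5 | h5
      · exact h1.2 h5
      · exact h4 (τ.injective h5)
    · rw [if_neg h1, zero_mul]
  have key2 : auxN x (σ * τ) = auxN x σ + auxN x τ := by
    ext i j
    rw [Matrix.add_apply]
    unfold auxN
    rw [Matrix.of_apply, Matrix.of_apply, Matrix.of_apply, Equiv.Perm.mul_apply]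
    rcases h j with h1 | h1
    · by_cases h2 : τ j = j
      · simp [h1, h2]
      · have h3 : σ (τ j) = τ j := by
          rcases h (τ j) with h5 | h5
          · exact h5
          · exact absurd (τ.injective h5) h2
        simp [h1, h2, h3]
    · simp [h1]
  rw [auxQ_eq, auxQ_eq, auxQ_eq, sub_mul, mul_sub, mul_sub, key, key2]
  simp only [one_mul, mul_one, sub_zero]
  abel

lemma auxQ_det_cycle {n : ℕ} (x : ℂ) (c : Equiv.Perm (Fin n)) (hc : c.IsCycle) :
    (auxQ x c).det = 1 - x ^ c.support.card := by
  have hne : (1 : Equiv.Perm (Fin n)) ≠ c := fun h => hc.ne_one h.symm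
  rw [Matrix.det_apply', Finset.sum_eq_add_of_mem 1 c (Finset.mem_univ _) (Finset.mem_univ _) hne]
  · have h1 : ∏ i, auxQ x c ((1 : Equiv.Perm (Fin n)) i) i = 1 := by
      apply Finset.prod_eq_one
      intro i _
      simp only [auxQ, Matrix.of_apply, Equiv.Perm.one_apply, if_true]
      rw [if_neg, sub_zero]
      rintro ⟨h1, h2⟩
      exact h2 h1.symm
    have h2 : ∏ i, auxQ x c (c i) i = (-x) ^ c.support.card := by
      rw [← Finset.prod_const, ← Finset.prod_subset (Finset.subset_univ c.support)]
      · apply Finset.prod_congr rfl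
        intro i hi
        rw [Equiv.Perm.mem_support] at hi
        simp [auxQ, hi]
      · intro i _ hi
        rw [Equiv.Perm.notMem_support] at hi
        simp [auxQ, hi]
    rw [h1, h2, hc.sign]
    push_cast
    rw [neg_mul, ← mul_pow]
    simp
    ring
  · intro σ _ ⟨hσ1, hσc⟩
    suffices h : ∃ i, auxQ x c (σ i) i = 0 by
      obtain ⟨i, hi⟩ := h
      rw [Finset.prod_eq_zero (f := fun i => auxQ x c (σ i) i) (Finset.mem_univ i) hi, mul_zero]
    by_contra! hall
    have hd : ∀ i, σ i = i ∨ (σ i = c i ∧ c i ≠ i) := by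
      intro i
      by_contra! hcon
      apply hall i
      simp only [auxQ, Matrix.of_apply]
      rw [if_neg hcon.1, if_neg, sub_zero]
      rintro ⟨h1, h2⟩
      exact h2 (hcon.2 h1)
    obtain ⟨a, ha⟩ : ∃ a, σ a ≠ a := by
      by_contra! hcon
      exact hσ1 (Equiv.ext hcon)
    have hstep : ∀ i, σ i ≠ i → σ (c i) ≠ c i := by
      intro i hi h
      rcases hd i with h1 | ⟨h1, h2⟩
      · exact hi h1
      · rw [← h1] at h
        exact hi (σ.injective h)
    have hpow : ∀ k : ℕ, σ ((c ^ k) a) ≠ (c ^ k) a := by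
      intro k
      induction k with
      | zero => simpa using ha
      | succ k ih =>
        rw [pow_succ', Equiv.Perm.mul_apply]
        exact hstep _ ih
    have hca : c a ≠ a := by
      rcases hd a with h1 | ⟨h1, h2⟩
      · exact absurd h1 ha
      · exact h2
    apply hσc
    ext1 i
    by_cases hi : c i = i
    · rcases hd i with h1 | ⟨h1, h2⟩
      · rw [h1, hi]
      · exact h1
    · obtain ⟨k, hk⟩ := hc.exists_pow_eq hca hi
      rcases hd i with h1 | ⟨h1, h2⟩
      · exact absurd (hk ▸ h1) (hpow k)
      · exact h1

lemma auxQ_det {n : ℕ} (x : ℂ) (θ : Equiv.Perm (Fin n)) :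
    (auxQ x θ).det = ∏ c ∈ θ.cycleFactorsFinset, (1 - x ^ c.support.card) ∧
    ((θ.sign : ℤ) : ℂ) = ∏ c ∈ θ.cycleFactorsFinset, ((c.sign : ℤ) : ℂ) := by
  induction θ using Equiv.Perm.cycle_induction_on with
  | base_one =>
    have : auxQ x (1 : Equiv.Perm (Fin n)) = 1 := by
      ext i j
      simp [auxQ, Matrix.one_apply]
    rw [this]
    simp
  | base_cycles c hc =>
    rw [auxQ_det_cycle x c hc, Equiv.Perm.cycleFactorsFinset_eq_singleton_self_iff.mpr hc]
    simp
  | induction_disjoint σ τ h hc ih1 ih2 =>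
    rw [h.cycleFactorsFinset_mul_eq_union,
      Finset.prod_union h.disjoint_cycleFactorsFinset,
      Finset.prod_union h.disjoint_cycleFactorsFinset, auxQ_mul x σ τ h, Matrix.det_mul,
      ih1.1, ih2.1, ← ih1.2, ← ih2.2]
    simp

lemma det_one_sub {n : ℕ} (x : ℂ) (θ : Equiv.Perm (Fin n)) :
    (1 - x • permMat θ).det = (1 - x) ^ (Finset.univ.filter fun i => θ i = i).card *
      ∏ c ∈ θ.cycleFactorsFinset, (1 - x ^ c.support.card) := by
  have : 1 - x • permMat θ = auxQ x θ * Matrix.diagonal (fun i => if θ i = i then 1 - x else 1) := by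
    ext i j
    rw [Matrix.mul_diagonal]
    simp only [auxQ, permMat, Matrix.sub_apply, Matrix.one_apply, Matrix.smul_apply,
      Matrix.of_apply, smul_eq_mul]
    by_cases h : θ j = j
    · simp only [h]
      by_cases hij : i = j <;> simp [hij]
    · simp [h]
  rw [this, Matrix.det_mul, Matrix.det_diagonal, (auxQ_det x θ).1, Finset.prod_ite]
  simp [mul_comm]

lemma permMat_mul {n : ℕ} (σ τ : Equiv.Perm (Fin n)) :
    permMat σ * permMat τ = permMat (σ * τ) := by
  ext i j
  simp [permMat, Matrix.mul_apply]
  congr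

lemma permMat_one {n : ℕ} : permMat (1 : Equiv.Perm (Fin n)) = 1 := by
  ext i j
  simp [permMat, Matrix.one_apply]
  congr

lemma permMat_det {n : ℕ} (σ : Equiv.Perm (Fin n)) :
    (permMat σ).det = ((σ.sign : ℤ) : ℂ) := by
  have : permMat σ = (1 : Matrix (Fin n) (Fin n) ℂ).submatrix id σ := by
    ext i j
    simp [permMat, Matrix.one_apply]
  rw [this, Matrix.det_permute']
  simp

lemma perm_sum_det {n : ℕ} (θ : Equiv.Perm (Fin n)) :
    (permMat θ + permMat θ⁻¹).det = 2 ^ (Finset.univ.filter fun i => θ i = i).card *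
      ∏ c ∈ θ.cycleFactorsFinset, (((c.sign : ℤ) : ℂ) *
        ((1 - Complex.I ^ c.support.card) * (1 - (-Complex.I) ^ c.support.card))) := by
  have h : permMat θ + permMat θ⁻¹ =
      permMat θ⁻¹ * ((1 - Complex.I • permMat θ) * (1 - (-Complex.I) • permMat θ)) := by
    have h1 : (1 - Complex.I • permMat θ) * (1 - (-Complex.I) • permMat θ)
        = 1 + permMat (θ * θ) := by
      rw [← permMat_mul]
      generalize permMat θ = M
      have e : (Complex.I • M) * (Complex.I • M) = -(M * M) := by
        rw [smul_mul_smul_comm, Complex.I_mul_I, neg_smul, one_smul]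
      rw [neg_smul, sub_neg_eq_add, sub_mul, mul_add, mul_add, e]
      simp only [one_mul, mul_one]
      abel
    rw [h1, mul_add, mul_one, permMat_mul, add_comm]
    simp
  rw [h, Matrix.det_mul, Matrix.det_mul, det_one_sub, det_one_sub, permMat_det,
    Equiv.Perm.sign_inv, (auxQ_det 0 θ).2, Finset.prod_mul_distrib, Finset.prod_mul_distrib]
  have : (2 : ℂ) = (1 - Complex.I) * (1 - (-Complex.I)) := by
    ring_nf
    simp
    norm_num
  rw [this, mul_pow]
  ring

lemma two_card {n : ℕ} (θ : Equiv.Perm (Fin n)) :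
    (Finset.univ.filter fun i => θ (θ i) = i).card =
      (Finset.univ.filter fun i => θ i = i).card +
      2 * (θ.cycleFactorsFinset.filter fun c => c.support.card = 2).card := by
  classical
  have h1 : (Finset.univ.filter fun i => θ (θ i) = i) =
      (Finset.univ.filter fun i => θ i = i) ∪
      (θ.cycleFactorsFinset.filter fun c => c.support.card = 2).biUnion (fun c => c.support) := by
    ext i
    simp only [Finset.mem_filter, Finset.mem_univ, true_and, Finset.mem_union, Finset.mem_biUnion]
    constructor
    · intro h
      by_cases hi : θ i = i
      · exact Or.inl hi
      right
      have hcyc := θ.isCycle_cycleOf hi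
      refine ⟨θ.cycleOf i, ⟨Equiv.Perm.cycleOf_mem_cycleFactorsFinset_iff.mpr
        (Equiv.Perm.mem_support.mpr hi), ?_⟩, ?_⟩
      · rw [← hcyc.orderOf]
        apply orderOf_eq_prime
        · rw [hcyc.pow_eq_one_iff]
          refine ⟨i, by simpa using hi, ?_⟩
          rw [Equiv.Perm.cycleOf_pow_apply_self]
          simpa [pow_two] using h
        · exact hcyc.ne_one
      · rw [Equiv.Perm.mem_support]
        simpa using hi
    · rintro (h | ⟨c, ⟨hc, h2⟩, hi⟩)
      · rw [h, h]
      · rw [Equiv.Perm.mem_cycleFactorsFinset_iff] at hc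
        have e1 := hc.2 i hi
        have e2 := hc.2 (c i) (Equiv.Perm.apply_mem_support.mpr hi)
        rw [← e1, ← e2]
        have := pow_orderOf_eq_one c
        rw [hc.1.orderOf, h2] at this
        have := congrArg (fun f => f i) this
        simpa [pow_two] using this
  rw [h1, Finset.card_union_of_disjoint, Finset.card_biUnion, Finset.sum_congr rfl
    (g := fun _ => 2), Finset.sum_const, smul_eq_mul, mul_comm]
  · intro c hc
    exact (Finset.mem_filter.mp hc).2
  · intro c hc d hd hcd
    exact (θ.cycleFactorsFinset_pairwise_disjoint (Finset.mem_filter.mp hc).1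
      (Finset.mem_filter.mp hd).1 hcd).disjoint_support
  · rw [Finset.disjoint_left]
    intro i hi hi2
    simp only [Finset.mem_filter, Finset.mem_univ, true_and, Finset.mem_biUnion] at hi hi2
    obtain ⟨c, ⟨hc, _⟩, hi2⟩ := hi2
    exact Equiv.Perm.mem_support.mp (Equiv.Perm.mem_cycleFactorsFinset_support_le hc hi2) hi

lemma sym_det {n : ℕ} (θ : Equiv.Perm (Fin n)) :
    (permMat θ + permMat θ⁻¹).det =
      2 ^ (Finset.univ.filter fun i => θ (θ i) = i).card * (symMat θ).det := by
  have : permMat θ + permMat θ⁻¹ =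
      Matrix.diagonal (fun i => if θ (θ i) = i then (2 : ℂ) else 1) * symMat θ := by
    ext i j
    rw [Matrix.diagonal_mul]
    simp only [permMat, symMat, Matrix.add_apply, Matrix.of_apply]
    have e1 : (i = θ⁻¹ j) ↔ θ i = j := by
      rw [Equiv.Perm.eq_inv_iff_eq]
    have e2 : (θ⁻¹ i = j) ↔ i = θ j := by
      rw [Equiv.Perm.inv_eq_iff_eq]
    simp only [e1, e2]
    by_cases h1 : θ i = j
    · subst h1
      by_cases h2 : θ (θ i) = i
      · simp [h2]; norm_num
      · simp [h2, Ne.symm h2]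
    · by_cases h2 : i = θ j
      · have : θ (θ i) ≠ i := by
          intro h
          apply h1
          rw [h2] at h ⊢
          exact θ.injective h
        simp [h1, ← h2, this]
      · simp [h1, h2]
  rw [this, Matrix.det_mul, Matrix.det_diagonal, Finset.prod_ite]
  simp

/-- Suppose the disjoint cycle decomposition of `θ` has no cycle of
length divisible by 4. With `F` the number of fixed points, `r` the number of cycles of
odd length, `s` the number of cycles of length `≡ 2 (mod 4)` greater than 2, and `t` the
number of 2-cycles, we have `det(P_θ + P_{θ⁻¹}) = (−1)^{s+t}·2^{F+r+2(s+t)}` and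
`det(S_θ) = (−1)^{s+t}·2^{r+2s}`. -/
theorem genMatrixFn_stmt19 (n : ℕ) (hn : 1 ≤ n) (θ : Equiv.Perm (Fin n))
    (hno4 : ∀ c ∈ θ.cycleFactorsFinset, ¬ (4 ∣ c.support.card))
    (F r s t : ℕ)
    (hF : F = (Finset.univ.filter fun i => θ i = i).card)
    (hr : r = (θ.cycleFactorsFinset.filter fun c => Odd c.support.card).card)
    (hs : s = (θ.cycleFactorsFinset.filter fun c =>
      c.support.card % 4 = 2 ∧ 2 < c.support.card).card)
    (ht : t = (θ.cycleFactorsFinset.filter fun c => c.support.card = 2).card) :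
    (permMat θ + permMat θ⁻¹).det = (-1 : ℂ) ^ (s + t) * 2 ^ (F + r + 2 * (s + t)) ∧
      (symMat θ).det = (-1 : ℂ) ^ (s + t) * 2 ^ (r + 2 * s) := by
  have hst : (θ.cycleFactorsFinset.filter fun c => ¬ Odd c.support.card).card = s + t := by
    rw [hs, ht, ← Finset.card_union_of_disjoint]
    · congr 1
      rw [← Finset.filter_or]
      apply Finset.filter_congr
      intro c hc
      have h4 := hno4 c hc
      have h2 := (Equiv.Perm.mem_cycleFactorsFinset_iff.mp hc).1.two_le_card_support
      rw [Nat.odd_iff]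
      omega
    · rw [Finset.disjoint_filter]
      intro c _ h1 h2
      omega
  have hA : (permMat θ + permMat θ⁻¹).det = (-1 : ℂ) ^ (s + t) * 2 ^ (F + r + 2 * (s + t)) := by
    rw [perm_sum_det, ← hF, Finset.prod_congr rfl
      (g := fun c => if Odd c.support.card then (2 : ℂ) else (-4)), Finset.prod_ite]
    · rw [Finset.prod_const, Finset.prod_const, hst, ← hr]
      rw [show (-4 : ℂ) = (-1) * 2 ^ 2 by norm_num, mul_pow, ← pow_mul]
      ring
    · intro c hc
      have h4 := hno4 c hc
      rw [(Equiv.Perm.mem_cycleFactorsFinset_iff.mp hc).1.sign]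
      generalize c.support.card = l at h4
      by_cases ho : Odd l
      · have hI : Complex.I ^ l * Complex.I ^ l = -1 := by
          rw [← mul_pow, Complex.I_mul_I, ho.neg_one_pow]
        rw [if_pos ho, ho.neg_pow, ho.neg_pow]
        push_cast
        rw [one_pow]
        linear_combination -hI
      · rw [if_neg ho]
        rw [Nat.not_odd_iff_even] at ho
        obtain ⟨k, hk⟩ := ho
        have hkodd : Odd k := by rw [Nat.odd_iff]; omega
        have hI : Complex.I ^ l = -1 := by
          rw [hk, ← two_mul, pow_mul, Complex.I_sq, hkodd.neg_one_pow]
        have hl : Even l := ⟨k, hk⟩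
        rw [hl.neg_pow, hl.neg_pow, hI]
        push_cast
        norm_num
  refine ⟨hA, ?_⟩
  have hB := sym_det θ
  rw [hA, two_card, ← hF, ← ht] at hB
  have h0 : (2 : ℂ) ^ (F + 2 * t) ≠ 0 := pow_ne_zero _ two_ne_zero
  apply mul_left_cancel₀ h0
  rw [← hB]
  ring
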